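/- arXiv:1807.07045 — 2 statements merged into one kernel-verified Lean document; each statement's English description precedes it below -/
import Mathlib

section
/- Let k₀ be a field of characteristic ≠ 2, b, c ∈ k₀ˣ with b not a square, and suppose that in the Witt ring W(k₀) one has ⟨⟨ν, b+1⟩⟩ ∈ ⟨⟨b⟩⟩·W(k₀) and ⟨c,−ν⟩⊗⟨⟨b+c²⟩⟩ ∈ ⟨⟨b⟩⟩·W(k₀) for some ν ∈ k₀ˣ. Then c ∈ (k₀ˣ ∩ D_{k₀(√b)}(⟨⟨b+1⟩⟩)) · (k₀ˣ ∩ D_{k₀(√b)}(⟨⟨b+c²⟩⟩)). -/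
open scoped BigOperators

/-- The diagonal quadratic form with weights `w`, as a function on `ι → K`. -/
def diagQF {K : Type} [Field K] {ι : Type} [Fintype ι] (w : ι → K) : (ι → K) → K :=
  fun v => ∑ i, w i * v i ^ 2

/-- `c` is a value represented by the diagonal quadratic form with weights `w`. -/
def RepresentsQF {K : Type} [Field K] {ι : Type} [Fintype ι] (w : ι → K) (c : K) : Prop :=
  ∃ v, diagQF w v = c

/-- Isometry (isomorphism) of diagonal quadratic forms. -/
def QFEquiv (K : Type) [Field K] {ι κ : Type} [Fintype ι] [Fintype κ]
    (w : ι → K) (w' : κ → K) : Prop :=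
  ∃ e : (ι → K) ≃ₗ[K] (κ → K), ∀ v, diagQF w' (e v) = diagQF w v

/-- Scaling a diagonal quadratic form by `c` : the form `⟨c⟩·q`. -/
def smulW {K : Type} [Field K] {ι : Type} (c : K) (w : ι → K) : ι → K := fun i => c * w i

/-- Tensor product of diagonal quadratic forms. -/
def tensorW {K : Type} [Field K] {ι κ : Type} (w₁ : ι → K) (w₂ : κ → K) : ι × κ → K :=
  fun p => w₁ p.1 * w₂ p.2

/-- The 1-fold Pfister form `⟨⟨a⟩⟩ = ⟨1, -a⟩`. -/
def pf1 {K : Type} [Field K] (a : K) : Fin 2 → K := ![1, -a]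

/-- The 2-fold Pfister form `⟨⟨a, d⟩⟩ = ⟨1,-a⟩ ⊗ ⟨1,-d⟩`. -/
def pf2 {K : Type} [Field K] (a d : K) : Fin 2 × Fin 2 → K := tensorW (pf1 a) (pf1 d)

/-- The n-fold Pfister form `⟨⟨a 0, …, a (n-1)⟩⟩`. -/
def pfW {K : Type} [Field K] {n : ℕ} (a : Fin n → K) : (Fin n → Fin 2) → K :=
  fun f => ∏ i, if f i = 0 then 1 else -a i

/-- Orthogonal sum of diagonal quadratic forms. -/
def orthW {K : Type} [Field K] {ι κ : Type} (w₁ : ι → K) (w₂ : κ → K) : ι ⊕ κ → K :=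
  Sum.elim w₁ w₂

/-- The weights of an orthogonal sum of `m` hyperbolic planes. -/
def hypW (K : Type) [Field K] (m : ℕ) : Fin m ⊕ Fin m → K :=
  Sum.elim (fun _ => 1) (fun _ => -1)

/-- Witt equivalence of diagonal quadratic forms: they become isometric after
adding hyperbolic planes. -/
def WittEquiv (K : Type) [Field K] {ι κ : Type} [Fintype ι] [Fintype κ]
    (w : ι → K) (w' : κ → K) : Prop :=
  ∃ m m' : ℕ, QFEquiv K (orthW w (hypW K m)) (orthW w' (hypW K m'))

/-- A diagonal quadratic form is anisotropic. -/
def AnisotropicQF {K : Type} [Field K] {ι : Type} [Fintype ι] (w : ι → K) : Prop :=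
  ∀ v, diagQF w v = 0 → v = 0

/-- Base change of a diagonal quadratic form along a field extension. -/
def bcW {k K : Type} [Field k] [Field K] [Algebra k K] {ι : Type} (w : ι → k) : ι → K :=
  fun i => algebraMap k K (w i)



section aux

variable {K : Type} [Field K]

lemma aux_dot {M : ℕ} (A B : Submodule K (Fin M → K))
    (h : ∀ x ∈ A, ∀ y ∈ B, ∑ i, x i * y i = 0) :
    Module.finrank K A + Module.finrank K B ≤ M := by
  have h1 := Subspace.finrank_add_finrank_dualAnnihilator_eq A
  have h2 : B.map (dotProductEquiv K (Fin M)).toLinearMap ≤ A.dualAnnihilator := by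
    rintro _ ⟨y, hy, rfl⟩
    rw [Submodule.mem_dualAnnihilator]
    intro x hx
    have := h x hx y hy
    simp [dotProduct]
    rw [← this]
    exact Finset.sum_congr rfl (fun i _ => mul_comm _ _)
  have h3 := Submodule.finrank_mono h2
  rw [LinearEquiv.finrank_map_eq] at h3
  simp at h1
  omega

lemma aux_polar (h2 : (2 : K) ≠ 0) {ι : Type} [Fintype ι] (w : ι → K) (u v : ι → K)
    (hu : diagQF w u = 0) (hv : diagQF w v = 0) (huv : diagQF w (u + v) = 0) :
    ∑ i, w i * (u i * v i) = 0 := by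
  have : diagQF w (u + v) = diagQF w u + diagQF w v + 2 * ∑ i, w i * (u i * v i) := by
    simp only [diagQF, Finset.mul_sum, ← Finset.sum_add_distrib]
    refine Finset.sum_congr rfl fun i _ => ?_
    simp only [Pi.add_apply]; ring
  rw [hu, hv, huv] at this
  simpa [h2] using this.symm

lemma aux_witt (h2 : (2 : K) ≠ 0) {ι : Type} [Fintype ι] (w : ι → K) (M : ℕ)
    {E : Type} [AddCommGroup E] [Module K E] [FiniteDimensional K E]
    (f : E →ₗ[K] (ι ⊕ (Fin M ⊕ Fin M) → K)) (hf : Function.Injective f)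
    (hQ : ∀ z, diagQF (orthW w (hypW K M)) (f z) = 0) :
    ∃ T : Submodule K (ι → K), Module.finrank K E ≤ Module.finrank K T + M ∧
      ∀ v ∈ T, diagQF w v = 0 := by
  let χ : E →ₗ[K] (Fin M → K) := (LinearMap.funLeft K K (fun i => Sum.inr (Sum.inl i))) ∘ₗ f
  let χ' : E →ₗ[K] (Fin M → K) := (LinearMap.funLeft K K (fun i => Sum.inr (Sum.inr i))) ∘ₗ f
  let ψ : E →ₗ[K] (ι → K) := (LinearMap.funLeft K K (fun i => Sum.inl i)) ∘ₗ f
  have hχ : ∀ z i, χ z i = f z (Sum.inr (Sum.inl i)) := fun _ _ => rfl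
  have hχ' : ∀ z i, χ' z i = f z (Sum.inr (Sum.inr i)) := fun _ _ => rfl
  have hψ : ∀ z i, ψ z i = f z (Sum.inl i) := fun _ _ => rfl
  let φ : E →ₗ[K] (Fin M → K) := χ - χ'
  have hφ : ∀ z, z ∈ LinearMap.ker φ ↔ ∀ i, χ z i = χ' z i := by
    intro z
    rw [LinearMap.mem_ker]
    constructor
    · intro h i
      have := congrFun h i
      exact sub_eq_zero.mp this
    · intro h
      funext i
      exact sub_eq_zero.mpr (h i)
  let P := LinearMap.ker φ
  let ψP : P →ₗ[K] (ι → K) := ψ.domRestrict P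
  let U := LinearMap.ker ψP
  let χU : U →ₗ[K] (Fin M → K) := (χ.domRestrict P).domRestrict U
  have hχU : Function.Injective χU := by
    rw [← LinearMap.ker_eq_bot, LinearMap.ker_eq_bot']
    rintro ⟨⟨z, hz⟩, hu⟩ h0
    have hz' := (hφ z).1 hz
    have h0' : χ z = 0 := h0
    have hu' : ψ z = 0 := hu
    have : z = 0 := by
      apply hf
      rw [map_zero]
      funext i
      rcases i with i | i | i
      · exact congrFun hu' i
      · exact congrFun h0' i
      · have := hz' i
        rw [h0'] at this
        exact this.symm
    subst this
    rfl
  have hdot := aux_dot (LinearMap.range χU) (LinearMap.range φ) (by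
    rintro _ ⟨⟨⟨z, hz⟩, hu⟩, rfl⟩ _ ⟨y, rfl⟩
    have hz' := (hφ z).1 hz
    have hu' : ψ z = 0 := hu
    have hp := aux_polar h2 _ (f z) (f y) (hQ z) (hQ y) (by rw [← map_add]; exact hQ _)
    rw [Fintype.sum_sum_type, Fintype.sum_sum_type] at hp
    simp only [orthW, hypW, Sum.elim_inl, Sum.elim_inr, ← hχ, ← hχ', ← hψ, hu', ← hz'] at hp
    simp only [Pi.zero_apply, zero_mul, mul_zero, Finset.sum_const_zero, zero_add,
      ← Finset.sum_add_distrib] at hp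
    rw [← hp]
    refine Finset.sum_congr rfl fun i _ => ?_
    change χ z i * (χ y i - χ' y i) = _
    ring)
  have e1 := LinearMap.finrank_range_add_finrank_ker φ
  have e2 := LinearMap.finrank_range_add_finrank_ker ψP
  have e3 := LinearMap.finrank_range_of_inj hχU
  refine ⟨LinearMap.range ψP, ?_, ?_⟩
  · change _ + Module.finrank K P = _ at e1
    change _ + Module.finrank K U = _ at e2
    omega
  · rintro _ ⟨⟨z, hz⟩, rfl⟩
    have hz' := (hφ z).1 hz
    have := hQ z
    simp only [diagQF] at this
    rw [Fintype.sum_sum_type, Fintype.sum_sum_type] at this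
    simp only [orthW, hypW, Sum.elim_inl, Sum.elim_inr, ← hχ, ← hχ', ← hψ, ← hz'] at this
    change diagQF w (ψ z) = 0
    simpa [diagQF] using this

/-- Rank-two isotropic subspaces of `⟨a,-ν⟩ ⊗ ⟨1,-d⟩` give values of `⟨1,-d⟩`. -/
lemma aux_final (h2 : (2 : K) ≠ 0) (a ν d : K) (ha : a ≠ 0) (hd : d ≠ 0)
    (T : Submodule K (Fin 2 × Fin 2 → K)) (hT : 2 ≤ Module.finrank K T)
    (hQ : ∀ v ∈ T, diagQF (tensorW ![a, -ν] (pf1 d)) v = 0) :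
    RepresentsQF (pf1 d) (ν / a) := by
  have hQ' : ∀ v ∈ T, a * (v (0,0) ^ 2 - d * v (0,1) ^ 2) = ν * (v (1,0) ^ 2 - d * v (1,1)^2) := by
    intro v hv
    have := hQ v hv
    simp [diagQF, tensorW, pf1, Fintype.sum_prod_type, Fin.sum_univ_two] at this
    linear_combination this
  let g : T →ₗ[K] (Fin 2 → K) := (LinearMap.funLeft K K (fun i => ((1 : Fin 2), i))).domRestrict T
  by_cases hg : Function.Injective g
  · have hle := LinearMap.finrank_le_finrank_of_injective hg
    have hs := (LinearMap.injective_iff_surjective_of_finrank_eq_finrank (f := g)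
      (by simp at hle ⊢; omega)).1 hg
    obtain ⟨⟨v, hv⟩, hv'⟩ := hs ![1, 0]
    have h0 : v (1,0) = 1 := congrFun hv' 0
    have h1 : v (1,1) = 0 := congrFun hv' 1
    have := hQ' v hv
    rw [h0, h1] at this
    refine ⟨![v (0,0), v (0,1)], ?_⟩
    rw [eq_div_iff ha]
    simp [diagQF, pf1]
    linear_combination this
  · rw [← LinearMap.ker_eq_bot, LinearMap.ker_eq_bot'] at hg
    push Not at hg
    obtain ⟨⟨v, hv⟩, hv', hne⟩ := hg
    have h0 : v (1,0) = 0 := congrFun hv' 0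
    have h1 : v (1,1) = 0 := congrFun hv' 1
    have h3 := hQ' v hv
    rw [h0, h1] at h3
    have h4 : v (0,0) ^ 2 = d * v (0,1) ^ 2 := by
      have : a * (v (0,0) ^ 2 - d * v (0,1) ^ 2) = 0 := by rw [h3]; ring
      exact sub_eq_zero.1 ((mul_eq_zero.1 this).resolve_left ha)
    have h5 : v (0,1) ≠ 0 := by
      intro h
      apply hne
      rw [h] at h4
      have h6 : v (0,0) = 0 := by simpa using h4
      ext ⟨i, j⟩
      fin_cases i <;> fin_cases j <;> simpa
    have h6 : v (0,0) ≠ 0 := by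
      intro h
      rw [h] at h4
      simp [hd, h5] at h4
    refine ⟨![(ν / a + 1) / 2, v (0,1) * (ν / a - 1) / (2 * v (0,0))], ?_⟩
    have h7 : d = v (0,0) ^ 2 / v (0,1) ^ 2 := by field_simp; exact h4.symm
    simp [diagQF, pf1]
    rw [h7]
    field_simp
    ring

lemma aux_nondeg {k : Type} [Field k] (h2 : (2 : k) ≠ 0) {ι κ : Type} [Fintype ι] [Fintype κ]
    (w : ι → k) (w' : κ → k) (hw' : ∀ i, w' i ≠ 0) (h : QFEquiv k w w') (i : ι) : w i ≠ 0 := by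
  classical
  intro hi
  obtain ⟨e, he⟩ := h
  have key : ∀ v, diagQF w (v + Pi.single i 1) = diagQF w v := by
    intro v
    refine Finset.sum_congr rfl fun j _ => ?_
    by_cases hj : j = i
    · subst hj; simp [hi]
    · simp [hj]
  have key' : ∀ v, diagQF w' (v + e (Pi.single i 1)) = diagQF w' v := by
    intro v
    have := key (e.symm v)
    rw [← he, ← he, map_add] at this
    simpa using this
  set u := e (Pi.single i 1) with hu
  have hu0 : u = 0 := by
    funext j
    have a1 := key' 0
    have a2 := key' (Pi.single j 1)
    have : diagQF w' (Pi.single j 1 + u) = diagQF w' (Pi.single j 1) + diagQF w' u + 2 * (w' j * u j) := by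
      have : w' j * u j = ∑ l, w' l * ((Pi.single j (1:k) : κ → k) l * u l) := by
        rw [Finset.sum_eq_single j] <;> simp +contextual
      rw [this]
      simp only [diagQF, Finset.mul_sum, ← Finset.sum_add_distrib]
      refine Finset.sum_congr rfl fun i _ => ?_
      simp only [Pi.add_apply]; ring
    have a3 : diagQF w' u = 0 := by rw [zero_add] at a1; rw [a1]; simp [diagQF]
    rw [a2, a3] at this
    simpa [h2, hw' j] using this
  have : (Pi.single i 1 : ι → k) = 0 := e.injective (by rw [← hu, hu0, map_zero])
  have := congrFun this i
  simp at this

/-- Base change of an isometry. -/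
lemma aux_bc {k : Type} [Field k] [Algebra k K] (h2 : (2 : k) ≠ 0) {ι κ : Type}
    [Fintype ι] [Fintype κ]
    (w : ι → k) (w' : κ → k) (h : QFEquiv k w w') :
    ∃ f : (κ → K) →ₗ[K] (ι → K), Function.Injective f ∧
      ∀ v, diagQF (bcW w) (f v) = diagQF (bcW (K := K) w') v := by
  classical
  obtain ⟨e, he⟩ := h
  let A := LinearMap.toMatrix' e.toLinearMap
  let N := LinearMap.toMatrix' e.symm.toLinearMap
  have hAN : A * N = 1 := by
    rw [← LinearMap.toMatrix'_comp]
    simp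
  have hN : ∀ v, diagQF w (N.mulVec v) = diagQF w' v := by
    intro v
    have : N.mulVec v = e.symm v := by
      rw [← Matrix.toLin'_apply]; simp [N]
    rw [this, ← he]; simp
  have hquad : ∀ (F : Type) [Field F] (wf : ι → F) (wf' : κ → F) (n : Matrix ι κ F),
      (2 : F) ≠ 0 →
      ((∀ v, diagQF wf (n.mulVec v) = diagQF wf' v) ↔
        n.transpose * Matrix.diagonal wf * n = Matrix.diagonal wf') := by
    intro F _ wf wf' n hF
    have hd : ∀ {μ : Type} [Fintype μ] [DecidableEq μ] (q : μ → F) v,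
        diagQF q v = v ⬝ᵥ (Matrix.diagonal q).mulVec v := by
      intro μ _ _ q v
      simp only [diagQF, dotProduct, Matrix.mulVec_diagonal]
      refine Finset.sum_congr rfl fun i _ => ?_
      ring
    have hn : ∀ v, diagQF wf (n.mulVec v) =
        v ⬝ᵥ (n.transpose * Matrix.diagonal wf * n).mulVec v := by
      intro v
      rw [hd, ← Matrix.mulVec_mulVec, ← Matrix.mulVec_mulVec, Matrix.dotProduct_mulVec v,
        Matrix.vecMul_transpose]
    constructor
    · intro h
      have hsymm : ∀ i j, (n.transpose * Matrix.diagonal wf * n) i j =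
          (n.transpose * Matrix.diagonal wf * n) j i := by
        intro i j
        have : (n.transpose * Matrix.diagonal wf * n).transpose =
          n.transpose * Matrix.diagonal wf * n := by
          simp [Matrix.transpose_mul, Matrix.mul_assoc]
        exact congrFun (congrFun this j) i
      set S := n.transpose * Matrix.diagonal wf * n
      have h' : ∀ v, v ⬝ᵥ S.mulVec v = v ⬝ᵥ (Matrix.diagonal wf').mulVec v := by
        intro v; rw [← hn, ← hd, h]
      ext i j
      have c1 := h' (Pi.single i 1)
      have c2 := h' (Pi.single j 1)
      have c3 := h' (Pi.single i 1 + Pi.single j 1)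
      simp only [Matrix.mulVec_add, dotProduct_add, add_dotProduct, single_one_dotProduct,
        Matrix.mulVec_single_one, Matrix.col_apply] at c1 c2 c3
      have hs := hsymm i j
      have hs' : Matrix.diagonal wf' i j = Matrix.diagonal wf' j i := by
        by_cases hij : i = j
        · subst hij; rfl
        · rw [Matrix.diagonal_apply_ne _ hij, Matrix.diagonal_apply_ne _ (Ne.symm hij)]
      have : 2 * S i j = 2 * Matrix.diagonal wf' i j := by
        linear_combination c3 - c1 - c2 + hs - hs'
      exact mul_left_cancel₀ hF this
    · intro h v
      rw [hn, h, hd]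
  have h2K : (2 : K) ≠ 0 := by
    intro h
    apply h2
    apply (algebraMap k K).injective
    rw [map_ofNat, map_zero]
    exact h
  have hm := (hquad k w w' N h2).1 hN
  have hmK : Matrix.transpose (N.map (algebraMap k K)) * Matrix.diagonal (bcW (K := K) w) *
      N.map (algebraMap k K) = Matrix.diagonal (bcW (K := K) w') := by
    have := congrArg (fun X => Matrix.map X (algebraMap k K)) hm
    simp only [Matrix.map_mul] at this
    rw [Matrix.diagonal_map (map_zero _), Matrix.diagonal_map (map_zero _)] at this
    exact this
  refine ⟨Matrix.mulVecLin (N.map (algebraMap k K)), ?_, ?_⟩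
  · have hANK : A.map (algebraMap k K) * N.map (algebraMap k K) = 1 := by
      rw [← Matrix.map_mul, hAN]; simp
    intro x y hxy
    have := congrArg (A.map (algebraMap k K)).mulVec hxy
    simpa [Matrix.mulVec_mulVec, hANK] using this
  · intro v
    exact (hquad K (bcW w) (bcW w') _ h2K).2 hmK v

lemma aux_main {k : Type} [Field k] [Algebra k K] (h2 : (2 : k) ≠ 0) (b : k) (hb : b ≠ 0)
    (s : K) (hs : s ^ 2 = algebraMap k K b) (a ν d : k) (ha : a ≠ 0)
    (h : ∃ (m : ℕ) (r : Fin m → k), (∀ i, r i ≠ 0) ∧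
      WittEquiv k (tensorW ![a, -ν] (pf1 d)) (tensorW (pf1 b) r)) :
    RepresentsQF (pf1 (algebraMap k K d)) (algebraMap k K (ν / a)) := by
  obtain ⟨m, r, hr, M, m', he⟩ := h
  have h2K : (2 : K) ≠ 0 := by
    intro h
    apply h2
    apply (algebraMap k K).injective
    rw [map_ofNat, map_zero]
    exact h
  have hd : d ≠ 0 := by
    have := aux_nondeg h2 _ _ (by
      rintro (⟨i, j⟩ | i | i)
      · have := hr j
        fin_cases i <;> simp [orthW, tensorW, pf1, hb, this]
      · simp [orthW, hypW]
      · simp [orthW, hypW]) he (Sum.inl (0, 1))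
    simpa [orthW, tensorW, pf1, ha] using this
  have hcard : 4 + (M + M) = 2 * m + (m' + m') := by
    obtain ⟨e, -⟩ := he
    have := e.finrank_eq
    simpa using this
  obtain ⟨f, hf, hfQ⟩ := aux_bc (K := K) h2 _ _ he
  let g : (Fin m ⊕ Fin m' → K) →ₗ[K] ((Fin 2 × Fin m) ⊕ (Fin m' ⊕ Fin m') → K) :=
    { toFun := fun z => Sum.elim (fun p => ![s, 1] p.1 * z (Sum.inl p.2))
        (Sum.elim (fun i => z (Sum.inr i)) (fun i => z (Sum.inr i)))
      map_add' := by
        intro x y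
        funext i
        rcases i with i | i | i <;> simp [mul_add]
      map_smul' := by
        intro t y
        funext i
        rcases i with i | i | i <;> simp [mul_left_comm] }
  have hg : Function.Injective g := by
    intro x y hxy
    funext i
    rcases i with i | i
    · have := congrFun hxy (Sum.inl (1, i))
      simpa [g] using this
    · exact congrFun hxy (Sum.inr (Sum.inl i))
  have hgQ : ∀ z, diagQF (bcW (K := K) (orthW (tensorW (pf1 b) r) (hypW k m'))) (g z) = 0 := by
    intro z
    simp only [diagQF]
    rw [Fintype.sum_sum_type, Fintype.sum_sum_type, Fintype.sum_prod_type, Fin.sum_univ_two]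
    simp [bcW, orthW, hypW, tensorW, pf1, g, mul_pow, hs]
    rw [← sub_eq_add_neg, ← Finset.sum_sub_distrib]
    refine Finset.sum_eq_zero fun i _ => ?_
    ring
  obtain ⟨T, hT, hTQ⟩ := aux_witt h2K (bcW (K := K) (tensorW ![a, -ν] (pf1 d))) M (f ∘ₗ g)
    (hf.comp hg) (by
      intro z
      have e1 := hfQ (g z)
      rw [hgQ] at e1
      rw [← e1]
      refine Finset.sum_congr rfl fun i _ => ?_
      rcases i with i | i | i <;> simp [bcW, orthW, hypW])
  have := aux_final h2K (algebraMap k K a) (algebraMap k K ν) (algebraMap k K d)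
    (by simpa using ha) (by simpa using hd) T (by simp at hT; omega) (by
      intro v hv
      rw [← hTQ v hv]
      refine Finset.sum_congr rfl fun i _ => ?_
      obtain ⟨i, j⟩ := i
      fin_cases i <;> fin_cases j <;> simp [bcW, tensorW, pf1])
  rwa [map_div₀]

end aux

/-- if `⟨⟨ν,b+1⟩⟩ ∈ ⟨⟨b⟩⟩·W(k₀)` and `⟨c,−ν⟩⊗⟨⟨b+c²⟩⟩ ∈ ⟨⟨b⟩⟩·W(k₀)` for
some `ν ∈ k₀ˣ`, then `c ∈ (k₀ˣ ∩ D_{k₀(√b)}(⟨⟨b+1⟩⟩)) · (k₀ˣ ∩ D_{k₀(√b)}(⟨⟨b+c²⟩⟩))`.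
Here `K = k₀(√b)`. -/
theorem stmt_10 {k₀ K : Type} [Field k₀] [Field K] [Algebra k₀ K]
    (hchar : (2 : k₀) ≠ 0) (b c : k₀) (hb : b ≠ 0) (hc : c ≠ 0)
    (hbns : ¬∃ x : k₀, x ^ 2 = b)
    (s : K) (hs : s ^ 2 = algebraMap k₀ K b)
    (hgen : Algebra.adjoin k₀ {s} = ⊤)
    (ν : k₀) (hν : ν ≠ 0)
    (h1 : ∃ (m : ℕ) (r : Fin m → k₀), (∀ i, r i ≠ 0) ∧
      WittEquiv k₀ (pf2 ν (b + 1)) (tensorW (pf1 b) r))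
    (h2 : ∃ (m : ℕ) (r : Fin m → k₀), (∀ i, r i ≠ 0) ∧
      WittEquiv k₀ (tensorW ![c, -ν] (pf1 (b + c ^ 2))) (tensorW (pf1 b) r)) :
    ∃ α β : k₀, α ≠ 0 ∧ β ≠ 0 ∧ c = α * β ∧
      RepresentsQF (pf1 (algebraMap k₀ K (b + 1))) (algebraMap k₀ K α) ∧
      RepresentsQF (pf1 (algebraMap k₀ K (b + c ^ 2))) (algebraMap k₀ K β) := by
  
  have r1 := aux_main hchar b hb s hs 1 ν (b + 1) one_ne_zero h1
  have r2 := aux_main hchar b hb s hs c ν (b + c ^ 2) hc h2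
  have hνK : algebraMap k₀ K ν ≠ 0 := by simpa using hν
  have hcK : algebraMap k₀ K c ≠ 0 := by simpa using hc
  refine ⟨ν, c / ν, hν, div_ne_zero hc hν, by field_simp, by simpa using r1, ?_⟩
  obtain ⟨v, hv⟩ := r2
  refine ⟨fun i => v i * algebraMap k₀ K (c / ν), ?_⟩
  have : diagQF (pf1 (algebraMap k₀ K (b + c ^ 2))) (fun i => v i * algebraMap k₀ K (c / ν)) =
      diagQF (pf1 (algebraMap k₀ K (b + c ^ 2))) v * algebraMap k₀ K (c / ν) ^ 2 := by
    simp only [diagQF, Finset.sum_mul]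
    refine Finset.sum_congr rfl fun i _ => ?_
    ring
  rw [this, hv, map_div₀, map_div₀]
  field_simp
end

section
/- Let k be a field of characteristic ≠ 2, let q₁, q₂ be anisotropic quadratic forms over k, and let K be an odd-degree field extension of F = k((t)) with residue field k̄ (an odd-degree extension of k). If q₁ and q₂ are not similar over k, then for every μ ∈ Kˣ with odd valuation, the form (q₁)_K ⊥ t·(q₂)_K is not isometric to ⟨μ⟩·((q₁)_K ⊥ t·(q₂)_K). Equivalently, every similarity factor of (q₁ ⊥ ⟨t⟩q₂)_K has even valuation. -/
open scoped BigOperators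

/-! ### Laurent series: vanishing below a bound -/

/-- All coefficients of `f` below `r` vanish. -/
def VB {k : Type} [Field k] (f : LaurentSeries k) (r : ℤ) : Prop := ∀ j < r, f.coeff j = 0

lemma VB.mul {k : Type} [Field k] {f g : LaurentSeries k} {r s : ℤ} (hf : VB f r) (hg : VB g s) :
    VB (f * g) (r + s) := by
  intro j hj
  rw [HahnSeries.coeff_mul]
  apply Finset.sum_eq_zero
  rintro ⟨a, b⟩ hab
  rw [Finset.mem_antidiagonal] at hab
  simp only at hab ⊢
  by_cases h : a < r
  · rw [hf a h, zero_mul]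
  · rw [hg b (by lia), mul_zero]

lemma VB.coeff_mul {k : Type} [Field k] {f g : LaurentSeries k} {r s : ℤ}
    (hf : VB f r) (hg : VB g s) : (f * g).coeff (r + s) = f.coeff r * g.coeff s := by
  rw [HahnSeries.coeff_mul]
  rw [Finset.sum_eq_single (r, s)]
  · rintro ⟨a, b⟩ hab hne
    rw [Finset.mem_antidiagonal] at hab
    simp only at hab ⊢
    by_cases h : a < r
    · rw [hf a h, zero_mul]
    · by_cases h' : b < s
      · rw [hg b h', mul_zero]
      · exact absurd (by rw [Prod.mk.injEq]; constructor <;> lia) hne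
  · intro h
    rw [Finset.mem_antidiagonal] at h
    simp only [HahnSeries.mem_support] at h
    by_contra h2
    apply h
    refine ⟨?_, ?_, trivial⟩
    · intro h3; rw [h3, zero_mul] at h2; exact h2 rfl
    · intro h3; rw [h3, mul_zero] at h2; exact h2 rfl

/-- The constant Laurent series. -/
noncomputable def laC (k : Type) [Field k] : k →+* LaurentSeries k := HahnSeries.C

lemma coeff_laC_mul {k : Type} [Field k] (c : k) (f : LaurentSeries k) (j : ℤ) :
    (laC k c * f).coeff j = c * f.coeff j := by
  show (HahnSeries.C c * f).coeff j = _; rw [HahnSeries.C_mul_eq_smul]; rfl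

/-- The form with constant coefficients: vanishing. -/
lemma diag_VB {k : Type} [Field k] {n : ℕ} (d : Fin n → k) (y : Fin n → LaurentSeries k) (s : ℤ)
    (hy : ∀ i, VB (y i) s) :
    VB (∑ i, laC k (d i) * y i ^ 2) (2 * s) := by
  intro j hj
  rw [HahnSeries.coeff_sum]
  apply Finset.sum_eq_zero
  intro i _
  rw [coeff_laC_mul, sq, (hy i).mul (hy i) j (by lia), mul_zero]

lemma diag_coeff {k : Type} [Field k] {n : ℕ} (d : Fin n → k) (y : Fin n → LaurentSeries k) (s : ℤ)
    (hy : ∀ i, VB (y i) s) :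
    (∑ i, laC k (d i) * y i ^ 2).coeff (2 * s)
      = diagQF d (fun i => (y i).coeff s) := by
  rw [HahnSeries.coeff_sum]
  unfold diagQF
  apply Finset.sum_congr rfl
  intro i _
  rw [coeff_laC_mul, sq, two_mul, (hy i).coeff_mul (hy i), sq]

lemma coeff_t_mul {k : Type} [Field k] (f : LaurentSeries k) (j : ℤ) :
    (HahnSeries.single (1 : ℤ) (1 : k) * f).coeff j = f.coeff (j - 1) := by
  have := HahnSeries.coeff_single_mul_add (r := (1 : k)) (x := f) (a := j - 1) (b := (1 : ℤ))
  simpa using this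

/-- The weights of `q₁ ⊥ t q₂` over `k((t))`. -/
noncomputable def bigW {k : Type} [Field k] {n₁ n₂ : ℕ} (d₁ : Fin n₁ → k) (d₂ : Fin n₂ → k) :
    Fin n₁ ⊕ Fin n₂ → LaurentSeries k :=
  orthW (fun i => laC k (d₁ i))
    (fun j => HahnSeries.single (1 : ℤ) (1 : k) * laC k (d₂ j))

lemma bigW_apply {k : Type} [Field k] {n₁ n₂ : ℕ} (d₁ : Fin n₁ → k) (d₂ : Fin n₂ → k)
    (x : Fin n₁ ⊕ Fin n₂ → LaurentSeries k) :
    diagQF (bigW d₁ d₂) x = (∑ i, laC k (d₁ i) * x (Sum.inl i) ^ 2)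
      + HahnSeries.single (1 : ℤ) (1 : k) *
        (∑ j, laC k (d₂ j) * x (Sum.inr j) ^ 2) := by
  simp only [diagQF, bigW, orthW, Fintype.sum_sum_type, Sum.elim_inl, Sum.elim_inr,
    Finset.mul_sum, mul_assoc]

lemma big_coeff_even {k : Type} [Field k] {n₁ n₂ : ℕ} (d₁ : Fin n₁ → k) (d₂ : Fin n₂ → k)
    (x : Fin n₁ ⊕ Fin n₂ → LaurentSeries k) (s : ℤ)
    (h1 : ∀ i, VB (x (Sum.inl i)) s) (h2 : ∀ j, VB (x (Sum.inr j)) s) :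
    (diagQF (bigW d₁ d₂) x).coeff (2 * s) = diagQF d₁ (fun i => (x (Sum.inl i)).coeff s) := by
  rw [bigW_apply, HahnSeries.coeff_add, coeff_t_mul, diag_VB d₂ _ s h2 _ (by lia), add_zero,
    diag_coeff d₁ _ s h1]

lemma big_coeff_odd {k : Type} [Field k] {n₁ n₂ : ℕ} (d₁ : Fin n₁ → k) (d₂ : Fin n₂ → k)
    (x : Fin n₁ ⊕ Fin n₂ → LaurentSeries k) (s : ℤ)
    (h1 : ∀ i, VB (x (Sum.inl i)) (s + 1)) (h2 : ∀ j, VB (x (Sum.inr j)) s) :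
    (diagQF (bigW d₁ d₂) x).coeff (2 * s + 1)
      = diagQF d₂ (fun j => (x (Sum.inr j)).coeff s) := by
  rw [bigW_apply, HahnSeries.coeff_add, coeff_t_mul, diag_VB d₁ _ (s + 1) h1 _ (by lia), zero_add,
    add_sub_cancel_right, diag_coeff d₂ _ s h2]

lemma VB.succ {k : Type} [Field k] {f : LaurentSeries k} {s : ℤ} (h : VB f s)
    (h' : f.coeff s = 0) : VB f (s + 1) := by
  intro j hj
  rcases lt_or_eq_of_le (Int.lt_add_one_iff.mp hj) with h1 | h1
  · exact h j h1
  · rw [h1, h']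

lemma VB.mono {k : Type} [Field k] {f : LaurentSeries k} {s r : ℤ} (h : VB f s)
    (h' : r ≤ s) : VB f r := fun j hj => h j (by lia)

lemma exists_VB {k : Type} [Field k] {ι : Type} [Fintype ι] (x : ι → LaurentSeries k) :
    ∃ s : ℤ, ∀ i, VB (x i) s := by
  obtain ⟨s, hs⟩ := (Set.finite_range (fun i => (x i).order)).bddBelow
  refine ⟨s, fun i j hj => HahnSeries.coeff_eq_zero_of_lt_order ?_⟩
  exact lt_of_lt_of_le hj (hs ⟨i, rfl⟩)

/-- Values of the form control the vanishing order of the vector. -/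
lemma big_VB {k : Type} [Field k] {n₁ n₂ : ℕ} (d₁ : Fin n₁ → k) (d₂ : Fin n₂ → k)
    (han₁ : AnisotropicQF d₁) (han₂ : AnisotropicQF d₂)
    (x : Fin n₁ ⊕ Fin n₂ → LaurentSeries k) (s : ℤ)
    (h : VB (diagQF (bigW d₁ d₂) x) (2 * s)) : ∀ i, VB (x i) s := by
  obtain ⟨s₀, hs₀⟩ := exists_VB x
  have key : ∀ m : ℕ, s₀ + m ≤ s → ∀ i, VB (x i) (s₀ + m) := by
    intro m
    induction m with
    | zero => intro _; simpa using hs₀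
    | succ m ih =>
      intro hm
      push_cast at hm
      have ih' := ih (by lia)
      have e1 := big_coeff_even d₁ d₂ x (s₀ + m) (fun i => ih' _) (fun i => ih' _)
      rw [h _ (by lia)] at e1
      have e2 := han₁ _ e1.symm
      have hl : ∀ i, VB (x (Sum.inl i)) (s₀ + m + 1) := fun i =>
        (ih' _).succ (congrFun e2 i)
      have e3 := big_coeff_odd d₁ d₂ x (s₀ + m) hl (fun i => ih' _)
      rw [h _ (by lia)] at e3
      have e4 := han₂ _ e3.symm
      have hr : ∀ i, VB (x (Sum.inr i)) (s₀ + m + 1) := fun i =>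
        (ih' _).succ (congrFun e4 i)
      intro i
      push_cast
      rw [← add_assoc]
      rcases i with i | i
      · exact hl i
      · exact hr i
  by_cases hle : s₀ ≤ s
  · have := key (s - s₀).toNat (by lia)
    intro i
    exact (this i).mono (by lia)
  · intro i
    exact (hs₀ i).mono (by lia)

lemma big_aniso {k : Type} [Field k] {n₁ n₂ : ℕ} (d₁ : Fin n₁ → k) (d₂ : Fin n₂ → k)
    (han₁ : AnisotropicQF d₁) (han₂ : AnisotropicQF d₂) : AnisotropicQF (bigW d₁ d₂) := by
  intro x hx
  funext i
  ext j
  exact big_VB d₁ d₂ han₁ han₂ x (j + 1) (by rw [hx]; intro _ _; rfl) i j (by lia)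

lemma final_step {k : Type} [Field k] {n₁ n₂ : ℕ} (d₁ : Fin n₁ → k) (d₂ : Fin n₂ → k)
    (han₁ : AnisotropicQF d₁) (han₂ : AnisotropicQF d₂) (a : LaurentSeries k) (ha : a ≠ 0)
    (hao : Odd a.order)
    (E : (Fin n₁ ⊕ Fin n₂ → LaurentSeries k) →ₗ[LaurentSeries k]
      (Fin n₁ ⊕ Fin n₂ → LaurentSeries k))
    (hE : ∀ x, diagQF (bigW d₁ d₂) (E x) = a * diagQF (bigW d₁ d₂) x) :
    ∃ ν : k, ν ≠ 0 ∧ QFEquiv k (smulW ν d₁) d₂ := by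
  obtain ⟨s, hs⟩ := hao
  have haV : VB a (2 * s + 1) := fun j hj => HahnSeries.coeff_eq_zero_of_lt_order (by rw [hs]; exact hj)
  set a0 := a.coeff (2 * s + 1) with ha0
  have ha0' : a0 ≠ 0 := by
    rw [ha0, ← hs]; exact HahnSeries.coeff_order_eq_zero.not.mpr ha
  let C := laC k
  have hC0 : ∀ c, VB (C c) 0 := by
    intro c j hj
    have := coeff_laC_mul c 1 j
    rw [mul_one] at this
    rw [this, HahnSeries.coeff_one, if_neg hj.ne, mul_zero]
  have hCc : ∀ c, (C c).coeff 0 = c := by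
    intro c
    have := coeff_laC_mul c 1 0
    rw [mul_one] at this
    rw [this, HahnSeries.coeff_one, if_pos rfl, mul_one]
  -- embeddings
  let j1 : (Fin n₁ → k) → (Fin n₁ ⊕ Fin n₂ → LaurentSeries k) :=
    fun x => Sum.elim (fun i => C (x i)) 0
  let j2 : (Fin n₂ → k) → (Fin n₁ ⊕ Fin n₂ → LaurentSeries k) :=
    fun x => Sum.elim 0 (fun i => C (x i))
  have j1add : ∀ x y, j1 (x + y) = j1 x + j1 y := by
    intro x y; funext i; rcases i with i | i <;> simp [j1]
  have j2add : ∀ x y, j2 (x + y) = j2 x + j2 y := by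
    intro x y; funext i; rcases i with i | i <;> simp [j2]
  have j1smul : ∀ (c : k) x, j1 (c • x) = C c • j1 x := by
    intro c x; funext i; rcases i with i | i <;> simp [j1]
  have j2smul : ∀ (c : k) x, j2 (c • x) = C c • j2 x := by
    intro c x; funext i; rcases i with i | i <;> simp [j2]
  have j1V : ∀ x i, VB (j1 x i) 0 := by
    intro x i
    rcases i with i | i
    · exact hC0 _
    · intro _ _; rfl
  have j2V : ∀ x i, VB (j2 x i) 0 := by
    intro x i
    rcases i with i | i
    · intro _ _; rfl
    · exact hC0 _
  have q1 : ∀ x, diagQF (bigW d₁ d₂) (j1 x) = C (diagQF d₁ x) := by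
    intro x
    rw [bigW_apply]
    simp [j1, diagQF, C]
  have q2 : ∀ x, diagQF (bigW d₁ d₂) (j2 x) = HahnSeries.single (1 : ℤ) (1 : k) * C (diagQF d₂ x) := by
    intro x
    rw [bigW_apply]
    simp [j2, diagQF, C]
  -- values
  have v1 : ∀ x, VB (diagQF (bigW d₁ d₂) (E (j1 x))) (2 * s + 1) := by
    intro x
    rw [hE, q1]
    simpa using haV.mul (hC0 (diagQF d₁ x))
  have c1 : ∀ x, (diagQF (bigW d₁ d₂) (E (j1 x))).coeff (2 * s + 1) = a0 * diagQF d₁ x := by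
    intro x
    rw [hE, q1]
    have := haV.coeff_mul (hC0 (diagQF d₁ x))
    rw [add_zero, hCc] at this
    exact this
  have v2 : ∀ x, VB (diagQF (bigW d₁ d₂) (E (j2 x))) (2 * (s + 1)) := by
    intro x j hj
    rw [hE, q2, mul_left_comm, coeff_t_mul]
    exact haV.mul (hC0 (diagQF d₂ x)) _ (by lia)
  have c2 : ∀ x, (diagQF (bigW d₁ d₂) (E (j2 x))).coeff (2 * (s + 1)) = a0 * diagQF d₂ x := by
    intro x
    rw [hE, q2, mul_left_comm, coeff_t_mul]
    have := haV.coeff_mul (hC0 (diagQF d₂ x))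
    rw [add_zero, hCc] at this
    rw [← this]
    congr 1
    ring
  have w1 : ∀ x i, VB (E (j1 x) i) s := fun x =>
    big_VB d₁ d₂ han₁ han₂ _ s ((v1 x).mono (by lia))
  have w1' : ∀ x i, VB (E (j1 x) (Sum.inl i)) (s + 1) := by
    intro x i
    have e1 := big_coeff_even d₁ d₂ (E (j1 x)) s (fun i => w1 x _) (fun i => w1 x _)
    rw [v1 x _ (by lia)] at e1
    exact (w1 x _).succ (congrFun (han₁ _ e1.symm) i)
  have w2 : ∀ x i, VB (E (j2 x) i) (s + 1) := fun x =>
    big_VB d₁ d₂ han₁ han₂ _ (s + 1) (v2 x)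
  let g : (Fin n₁ → k) →ₗ[k] (Fin n₂ → k) :=
    { toFun := fun x i => (E (j1 x) (Sum.inr i)).coeff s
      map_add' := by intro x y; funext i; simp [j1add]
      map_smul' := by
        intro c x; funext i
        simp only [j1smul, map_smul, Pi.smul_apply, smul_eq_mul, RingHom.id_apply]
        exact coeff_laC_mul _ _ _ }
  let h : (Fin n₂ → k) →ₗ[k] (Fin n₁ → k) :=
    { toFun := fun x i => (E (j2 x) (Sum.inl i)).coeff (s + 1)
      map_add' := by intro x y; funext i; simp [j2add]
      map_smul' := by
        intro c x; funext i
        simp only [j2smul, map_smul, Pi.smul_apply, smul_eq_mul, RingHom.id_apply]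
        exact coeff_laC_mul _ _ _ }
  have hg : ∀ x, diagQF d₂ (g x) = a0 * diagQF d₁ x := by
    intro x
    rw [← c1 x, big_coeff_odd d₁ d₂ _ s (w1' x) (fun i => w1 x _)]
    rfl
  have hh : ∀ x, diagQF d₁ (h x) = a0 * diagQF d₂ x := by
    intro x
    rw [← c2 x, big_coeff_even d₁ d₂ _ (s + 1) (fun i => w2 x _) (fun i => w2 x _)]
    rfl
  have z1 : diagQF d₁ 0 = 0 := by simp [diagQF]
  have z2 : diagQF d₂ 0 = 0 := by simp [diagQF]
  have gi : Function.Injective g := by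
    rw [injective_iff_map_eq_zero]
    intro x hx
    have := hg x
    rw [hx, z2] at this
    exact han₁ _ ((mul_eq_zero.mp this.symm).resolve_left ha0')
  have hi : Function.Injective h := by
    rw [injective_iff_map_eq_zero]
    intro x hx
    have := hh x
    rw [hx, z1] at this
    exact han₂ _ ((mul_eq_zero.mp this.symm).resolve_left ha0')
  have l1 := LinearMap.finrank_le_finrank_of_injective gi
  have l2 := LinearMap.finrank_le_finrank_of_injective hi
  refine ⟨a0, ha0', LinearEquiv.ofInjectiveOfFinrankEq g gi (le_antisymm l1 l2), ?_⟩
  intro x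
  have : (LinearEquiv.ofInjectiveOfFinrankEq g gi (le_antisymm l1 l2)) x = g x := rfl
  rw [this, hg]
  simp [diagQF, smulW, Finset.mul_sum, mul_assoc]


/-! ### Norms of integral elements -/

section NormPart

variable {k L : Type} [Field k] [Field L] [Algebra (LaurentSeries k) L]

/-- `v` extends `e` times the `t`-adic valuation. -/
def ExtV (v : AddValuation L (WithTop ℤ)) (e : ℕ) : Prop :=
  ∀ x : LaurentSeries k, x ≠ 0 →
      v (algebraMap (LaurentSeries k) L x) = ((e : ℤ) * x.order : ℤ)

lemma ExtV.le {v : AddValuation L (WithTop ℤ)} {e : ℕ} (h : ExtV (k := k) v e)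
    {f : LaurentSeries k} {r : ℤ} (hf : VB f r) :
    (((e : ℤ) * r : ℤ) : WithTop ℤ) ≤ v (algebraMap (LaurentSeries k) L f) := by
  by_cases h0 : f = 0
  · rw [h0, map_zero, AddValuation.map_zero]; exact le_top
  · rw [h f h0]
    have : r ≤ f.order := by
      by_contra hlt
      exact HahnSeries.coeff_order_eq_zero.not.mpr h0 (hf _ (by lia))
    exact_mod_cast mul_le_mul_of_nonneg_left this (by positivity)

lemma VB_laC (c : k) : VB (laC k c) 0 := by
  intro j hj
  have := coeff_laC_mul c 1 j
  rw [mul_one] at this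
  rw [this, HahnSeries.coeff_one, if_neg hj.ne, mul_zero]

lemma coeff_laC_zero (c : k) : (laC k c).coeff 0 = c := by
  have := coeff_laC_mul c 1 0
  rw [mul_one] at this
  rw [this, HahnSeries.coeff_one, if_pos rfl, mul_one]

lemma coeff_single_mul' (s j : ℤ) (f : LaurentSeries k) :
    (HahnSeries.single s (1 : k) * f).coeff j = f.coeff (j - s) := by
  have := HahnSeries.coeff_single_mul_add (r := (1 : k)) (x := f) (a := j - s) (b := s)
  simpa using this

lemma single_mul_single' (s : ℤ) :
    (HahnSeries.single s (1 : k) : LaurentSeries k) * HahnSeries.single (-s) (1 : k) = 1 := by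
  rw [HahnSeries.single_mul_single]; simp

/-- A family independent modulo `t`. -/
def IndepMod (v : AddValuation L (WithTop ℤ)) (e : ℕ) {r : ℕ} (x : Fin r → L) : Prop :=
  (∀ i, 0 ≤ v (x i)) ∧ ∀ c : Fin r → k,
    (((e : ℤ) : ℤ) : WithTop ℤ) ≤ v (∑ i, algebraMap (LaurentSeries k) L (laC k (c i)) * x i) →
      c = 0

lemma IndepMod.linearIndependent {v : AddValuation L (WithTop ℤ)} {e : ℕ}
    (h : ExtV (k := k) v e) {r : ℕ} {x : Fin r → L} (hx : IndepMod (k := k) v e x) :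
    LinearIndependent (LaurentSeries k) x := by
  rw [Fintype.linearIndependent_iff]
  intro g hg
  have step : ∀ s : ℤ, (∀ i, VB (g i) s) → ∀ i, VB (g i) (s + 1) := by
    intro s hs
    set h' : Fin r → LaurentSeries k := fun i => HahnSeries.single (-s) (1 : k) * g i with hh'
    have h0 : ∑ i, algebraMap (LaurentSeries k) L (h' i) * x i = 0 := by
      have := congrArg (fun z => algebraMap (LaurentSeries k) L
        (HahnSeries.single (-s) (1 : k)) * z) hg
      simp only [mul_zero, Finset.mul_sum, Algebra.smul_def] at this
      rw [← this]
      apply Finset.sum_congr rfl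
      intro i _
      rw [hh', map_mul, mul_assoc]
    have hV : ∀ i, VB (h' i - laC k ((g i).coeff s)) 1 := by
      intro i
      have : VB (h' i - laC k ((g i).coeff s)) (0 + 1) := by
        apply VB.succ
        · intro j hj
          rw [HahnSeries.coeff_sub, VB_laC _ j hj, sub_zero, hh', coeff_single_mul']
          exact hs i _ (by lia)
        · rw [HahnSeries.coeff_sub, coeff_laC_zero, hh', coeff_single_mul']
          simp
      simpa using this
    have hc := hx.2 (fun i => (g i).coeff s) (by
      have e1 : ∑ i, algebraMap (LaurentSeries k) L (laC k ((g i).coeff s)) * x i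
          = - ∑ i, algebraMap (LaurentSeries k) L (h' i - laC k ((g i).coeff s)) * x i := by
        simp only [map_sub, sub_mul, Finset.sum_sub_distrib, h0, zero_sub, neg_neg]
      rw [e1, AddValuation.map_neg]
      apply AddValuation.map_le_sum
      intro i _
      rw [AddValuation.map_mul]
      have := add_le_add (h.le (hV i)) (hx.1 i)
      simpa using this)
    intro i
    exact (hs i).succ (congrFun hc i)
  obtain ⟨s, hs⟩ := exists_VB g
  have all : ∀ m : ℕ, ∀ i, VB (g i) (s + m) := by
    intro m
    induction m with
    | zero => simpa using hs
    | succ m ih =>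
      have := step _ ih
      intro i
      push_cast
      rw [← add_assoc]
      exact this i
  intro i
  ext j
  exact all (j + 1 - s).toNat i j (by lia)

lemma exists_lattice [FiniteDimensional (LaurentSeries k) L] {v : AddValuation L (WithTop ℤ)}
    {e : ℕ} (h : ExtV (k := k) v e) :
    ∃ (r : ℕ) (x : Fin r → L), IndepMod (k := k) v e x ∧ ∀ y, 0 ≤ v y → ∃ c : Fin r → k,
      (((e : ℤ) : ℤ) : WithTop ℤ) ≤
        v (y - ∑ i, algebraMap (LaurentSeries k) L (laC k (c i)) * x i) := by
  have hmax : ∃ r, (∃ x : Fin r → L, IndepMod (k := k) v e x) ∧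
      ¬ ∃ x : Fin (r + 1) → L, IndepMod (k := k) v e x := by
    by_contra hcon
    push Not at hcon
    have all : ∀ r, ∃ x : Fin r → L, IndepMod (k := k) v e x := by
      intro r
      induction r with
      | zero => exact ⟨Fin.elim0, fun i => i.elim0, fun c _ => Subsingleton.elim _ _⟩
      | succ r ih => exact hcon r ih
    obtain ⟨x, hx⟩ := all (Module.finrank (LaurentSeries k) L + 1)
    have := (hx.linearIndependent h).fintype_card_le_finrank
    simp at this
  obtain ⟨r, ⟨x, hx⟩, hr⟩ := hmax
  refine ⟨r, x, hx, ?_⟩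
  intro y hy
  by_contra hno
  push Not at hno
  apply hr
  refine ⟨Fin.snoc x y, ?_, ?_⟩
  · intro i
    refine Fin.lastCases ?_ (fun i => ?_) i
    · simpa using hy
    · simpa using hx.1 i
  · intro c hc
    rw [Fin.sum_univ_castSucc] at hc
    simp only [Fin.snoc_castSucc, Fin.snoc_last] at hc
    have hl : c (Fin.last r) = 0 := by
      by_contra hl
      apply not_le_of_gt (hno (fun i => - (c i.castSucc / c (Fin.last r))))
      have e1 : y - ∑ i, algebraMap (LaurentSeries k) L
            (laC k (-(c (Fin.castSucc i) / c (Fin.last r)))) * x i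
          = algebraMap (LaurentSeries k) L (laC k (c (Fin.last r))⁻¹) *
            (∑ i : Fin r, algebraMap (LaurentSeries k) L (laC k (c i.castSucc)) * x i
              + algebraMap (LaurentSeries k) L (laC k (c (Fin.last r))) * y) := by
        rw [mul_add, ← mul_assoc, ← map_mul, ← map_mul, inv_mul_cancel₀ hl, map_one, map_one,
          one_mul, Finset.mul_sum, sub_eq_add_neg, add_comm, ← Finset.sum_neg_distrib]
        congr 1
        apply Finset.sum_congr rfl
        intro i _
        rw [← mul_assoc, ← map_mul, ← map_mul, map_neg, map_neg, neg_mul, neg_neg]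
        congr 3
        rw [div_eq_mul_inv, mul_comm]
      rw [e1, AddValuation.map_mul]
      have := add_le_add (h.le (VB_laC (c (Fin.last r))⁻¹)) hc
      simpa using this
    rw [hl] at hc
    simp only [map_zero, zero_mul, add_zero] at hc
    have := hx.2 _ hc
    funext i
    refine Fin.lastCases ?_ (fun i => ?_) i
    · exact hl
    · exact congrFun this i

lemma expand {v : AddValuation L (WithTop ℤ)}
    {e : ℕ} (he : 0 < e) (h : ExtV (k := k) v e) {r : ℕ} {x : Fin r → L}
    (hx : ∀ i, 0 ≤ v (x i))
    (hs : ∀ y, 0 ≤ v y → ∃ c : Fin r → k,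
      (((e : ℤ) : ℤ) : WithTop ℤ) ≤
        v (y - ∑ i, algebraMap (LaurentSeries k) L (laC k (c i)) * x i))
    (y : L) (hy : 0 ≤ v y) :
    ∃ a : Fin r → PowerSeries k,
      y = ∑ i, algebraMap (LaurentSeries k) L (HahnSeries.ofPowerSeries ℤ k (a i)) * x i := by
  have hs' : ∀ y : {y : L // 0 ≤ v y}, ∃ c : Fin r → k, (((e : ℤ) : ℤ) : WithTop ℤ) ≤
        v (y.1 - ∑ i, algebraMap (LaurentSeries k) L (laC k (c i)) * x i) := fun y => hs y.1 y.2
  choose c hc using hs'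
  set T := algebraMap (LaurentSeries k) L (HahnSeries.single (1 : ℤ) (1 : k)) with hT
  set T' := algebraMap (LaurentSeries k) L (HahnSeries.single (-1 : ℤ) (1 : k)) with hT'
  have hTT : T * T' = 1 := by
    rw [hT, hT', ← map_mul, single_mul_single', map_one]
  have vT' : v T' = ((-(e : ℤ) : ℤ) : WithTop ℤ) := by
    rw [hT', h _ (by simp), HahnSeries.order_single one_ne_zero]; simp
  have vT : v T = (((e : ℤ) : ℤ) : WithTop ℤ) := by
    rw [hT, h _ (by simp), HahnSeries.order_single one_ne_zero]; simp
  let nxt : {y : L // 0 ≤ v y} → {y : L // 0 ≤ v y} := fun y =>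
    ⟨T' * (y.1 - ∑ i, algebraMap (LaurentSeries k) L (laC k (c y i)) * x i), by
      rw [AddValuation.map_mul, vT']
      have := add_le_add (le_refl ((-(e : ℤ) : ℤ) : WithTop ℤ)) (hc y)
      rw [← WithTop.coe_add] at this
      simpa using this⟩
  have hn : ∀ y, T * (nxt y).1
      = y.1 - ∑ i, algebraMap (LaurentSeries k) L (laC k (c y i)) * x i := by
    intro y
    show T * (T' * _) = _
    rw [← mul_assoc, hTT, one_mul]
  let a : {y : L // 0 ≤ v y} → Fin r → PowerSeries k := fun y i =>
    PowerSeries.mk (fun j => c (nxt^[j] y) i)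
  have ha : ∀ y i, a y i = PowerSeries.C (c y i) + PowerSeries.X * a (nxt y) i := by
    intro y i
    ext n
    cases n with
    | zero => simp [a]
    | succ n => simp [a, PowerSeries.coeff_succ_X_mul]
  have ha' : ∀ y i, algebraMap (LaurentSeries k) L (HahnSeries.ofPowerSeries ℤ k (a y i))
      = algebraMap (LaurentSeries k) L (laC k (c y i)) +
        T * algebraMap (LaurentSeries k) L (HahnSeries.ofPowerSeries ℤ k (a (nxt y) i)) := by
    intro y i
    rw [ha, map_add, map_mul, map_add, map_mul, HahnSeries.ofPowerSeries_C,
      HahnSeries.ofPowerSeries_X]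
    rfl
  let R : {y : L // 0 ≤ v y} → L := fun y =>
    y.1 - ∑ i, algebraMap (LaurentSeries k) L (HahnSeries.ofPowerSeries ℤ k (a y i)) * x i
  have hR : ∀ y, R y = T * R (nxt y) := by
    intro y
    simp only [R]
    rw [mul_sub, hn, Finset.mul_sum]
    simp only [ha' y, add_mul, Finset.sum_add_distrib, mul_assoc]
    ring
  have hVps : ∀ p : PowerSeries k, VB (HahnSeries.ofPowerSeries ℤ k p) 0 := by
    intro p j hj
    have := PowerSeries.coeff_coe (R := k) p j
    rw [this, if_pos hj]
  have hR0 : ∀ y, 0 ≤ v (R y) := by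
    intro y
    apply AddValuation.map_le_sub _ y.2
    apply AddValuation.map_le_sum
    intro i _
    rw [AddValuation.map_mul]
    have := add_le_add (h.le (hVps (a y i))) (hx i)
    simpa using this
  have hRm : ∀ m : ℕ, ∀ y, (((e : ℤ) * m : ℤ) : WithTop ℤ) ≤ v (R y) := by
    intro m
    induction m with
    | zero => intro y; simpa using hR0 y
    | succ m ih =>
      intro y
      rw [hR, AddValuation.map_mul, vT]
      have := add_le_add (le_refl (((e : ℤ) : ℤ) : WithTop ℤ)) (ih (nxt y))
      refine le_trans (le_of_eq ?_) this
      rw [← WithTop.coe_add]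
      congr 1
      push_cast; ring
  refine ⟨a ⟨y, hy⟩, ?_⟩
  have hz : R ⟨y, hy⟩ = 0 := by
    by_contra hne
    have hnt : v (R ⟨y, hy⟩) ≠ ⊤ := by rwa [AddValuation.ne_top_iff]
    obtain ⟨z, hz⟩ := WithTop.ne_top_iff_exists.mp hnt
    have := hRm (z.toNat + 1) ⟨y, hy⟩
    rw [← hz, WithTop.coe_le_coe] at this
    push_cast at this
    have h1 : (1 : ℤ) ≤ e := by exact_mod_cast he
    have h2 : z ≤ z.toNat := Int.self_le_toNat z
    nlinarith
  exact sub_eq_zero.mp hz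

lemma norm_VB [FiniteDimensional (LaurentSeries k) L] {v : AddValuation L (WithTop ℤ)}
    {e : ℕ} (he : 0 < e) (h : ExtV (k := k) v e) (u : L) (hu : 0 ≤ v u) :
    VB (Algebra.norm (LaurentSeries k) u) 0 := by
  obtain ⟨r, x, hx, hs⟩ := exists_lattice h
  have hli := hx.linearIndependent h
  have hexp := expand he h hx.1 hs
  have hsp : ⊤ ≤ Submodule.span (LaurentSeries k) (Set.range x) := by
    intro y _
    have : ∃ N : ℕ, 0 ≤ v (algebraMap (LaurentSeries k) L (HahnSeries.single (N : ℤ) (1 : k)) * y) := by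
      by_cases hy : y = 0
      · exact ⟨0, by rw [hy, mul_zero, AddValuation.map_zero]; exact le_top⟩
      have hnt : v y ≠ ⊤ := by rwa [AddValuation.ne_top_iff]
      obtain ⟨z, hz⟩ := WithTop.ne_top_iff_exists.mp hnt
      refine ⟨(-z).toNat, ?_⟩
      rw [AddValuation.map_mul, h _ (by simp), HahnSeries.order_single one_ne_zero, ← hz,
        ← WithTop.coe_add]
      have h1 : (1 : ℤ) ≤ e := by exact_mod_cast he
      have h2 : -z ≤ (-z).toNat := Int.self_le_toNat _
      have : (0 : ℤ) ≤ (e : ℤ) * ((-z).toNat : ℤ) + z := by nlinarith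
      exact_mod_cast this
    obtain ⟨N, hN⟩ := this
    obtain ⟨a, ha⟩ := hexp _ hN
    have e1 : y = (HahnSeries.single (-(N : ℤ)) (1 : k) : LaurentSeries k) •
        ∑ i, (HahnSeries.ofPowerSeries ℤ k (a i) : LaurentSeries k) • x i := by
      simp only [Algebra.smul_def]
      rw [← ha, ← mul_assoc, ← map_mul, mul_comm (HahnSeries.single (-(N : ℤ)) (1 : k)),
        single_mul_single', map_one, one_mul]
    rw [e1]
    apply Submodule.smul_mem
    apply Submodule.sum_mem
    intro i _
    exact Submodule.smul_mem _ _ (Submodule.subset_span ⟨i, rfl⟩)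
  let b := Module.Basis.mk hli hsp
  have hux : ∀ j, ∃ a : Fin r → PowerSeries k, u * x j = ∑ i, algebraMap (LaurentSeries k) L
      (HahnSeries.ofPowerSeries ℤ k (a i)) * x i := by
    intro j
    apply hexp
    rw [AddValuation.map_mul]
    exact add_nonneg hu (hx.1 j)
  choose A hA using hux
  have hM : Algebra.leftMulMatrix b u
      = (HahnSeries.ofPowerSeries ℤ k).mapMatrix (Matrix.of fun i j => A j i) := by
    ext1 i j
    rw [Algebra.leftMulMatrix_eq_repr_mul]
    have : u * b j = ∑ i, (HahnSeries.ofPowerSeries ℤ k (A j i) : LaurentSeries k) • b i := by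
      simp only [b, Module.Basis.mk_apply, Algebra.smul_def]
      exact hA j
    rw [this, Module.Basis.repr_sum_self]
    rfl
  rw [Algebra.norm_eq_matrix_det b, hM, ← RingHom.map_det]
  intro j hj
  have := PowerSeries.coeff_coe (R := k) (Matrix.of fun i j => A j i).det j
  rw [this, if_pos hj]

lemma norm_order [FiniteDimensional (LaurentSeries k) L] {v : AddValuation L (WithTop ℤ)}
    {e : ℕ} (he : 0 < e) (h : ExtV (k := k) v e) (μ : L) (hμ : μ ≠ 0) (m : ℤ)
    (hm : v μ = (m : ℤ)) :
    (e : ℤ) * (Algebra.norm (LaurentSeries k) μ).order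
      = m * Module.finrank (LaurentSeries k) L := by
  set n := Module.finrank (LaurentSeries k) L with hn
  -- integer-exponent facts
  have hvpow : ∀ j : ℕ, v (μ ^ j) = ((j * m : ℤ) : WithTop ℤ) := by
    intro j
    induction j with
    | zero => simp
    | succ j ih =>
      rw [pow_succ, AddValuation.map_mul, ih, hm, ← WithTop.coe_add]
      congr 1; push_cast; ring
  have hN0 : Algebra.norm (LaurentSeries k) μ ≠ 0 := by
    rw [Algebra.norm_ne_zero_iff]; exact hμ
  set u := algebraMap (LaurentSeries k) L (HahnSeries.single (-m) (1 : k)) * μ ^ e with hu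
  have vu : v u = 0 := by
    rw [hu, AddValuation.map_mul, hvpow, h _ (by simp), HahnSeries.order_single one_ne_zero,
      ← WithTop.coe_add]
    have : (e : ℤ) * (-m) + e * m = 0 := by ring
    rw [this]; rfl
  have hu0 : u ≠ 0 := by
    intro h0; rw [h0, AddValuation.map_zero] at vu; exact absurd vu (by simp)
  have vui : v u⁻¹ = 0 := by
    have : v (u * u⁻¹) = 0 := by rw [mul_inv_cancel₀ hu0, AddValuation.map_one]
    rwa [AddValuation.map_mul, vu, zero_add] at this
  have n1 := norm_VB he h u vu.ge
  have n2 := norm_VB he h u⁻¹ vui.ge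
  have h1 : Algebra.norm (LaurentSeries k) u ≠ 0 := by rw [Algebra.norm_ne_zero_iff]; exact hu0
  have h2 : Algebra.norm (LaurentSeries k) u⁻¹ ≠ 0 := by
    rw [Algebra.norm_ne_zero_iff]; exact inv_ne_zero hu0
  have o1 : 0 ≤ (Algebra.norm (LaurentSeries k) u).order := by
    by_contra hlt
    exact HahnSeries.coeff_order_eq_zero.not.mpr h1 (n1 _ (by lia))
  have o2 : 0 ≤ (Algebra.norm (LaurentSeries k) u⁻¹).order := by
    by_contra hlt
    exact HahnSeries.coeff_order_eq_zero.not.mpr h2 (n2 _ (by lia))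
  have o3 : (Algebra.norm (LaurentSeries k) u).order
      + (Algebra.norm (LaurentSeries k) u⁻¹).order = 0 := by
    rw [← HahnSeries.order_mul h1 h2, ← map_mul, mul_inv_cancel₀ hu0, map_one,
      HahnSeries.order_one]
  have o4 : (Algebra.norm (LaurentSeries k) u).order = 0 := by lia
  rw [hu, map_mul, map_pow, Algebra.norm_algebraMap, HahnSeries.order_mul
    (pow_ne_zero _ (by simp)) (pow_ne_zero _ hN0), HahnSeries.order_pow, HahnSeries.order_pow,
    HahnSeries.order_single one_ne_zero] at o4
  simp only [nsmul_eq_mul, ← hn] at o4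
  linarith

end NormPart


/-! ### Transfers along odd degree extensions -/

/-- The transferred form `s(c x y)` is a one-dimensional form `⟨a⟩` plus a metabolic part. -/
def MetS {k L : Type} [Field k] [Field L] [Algebra k L] (s : L →ₗ[k] k) (c : L) (a : k) : Prop :=
  ∃ (U : Submodule k L) (w : L), (∀ x ∈ U, ∀ y ∈ U, s (c * (x * y)) = 0) ∧
    (∀ x ∈ U, s (c * (x * w)) = 0) ∧ s (c * (w * w)) = a ∧
    2 * Module.finrank k U + 1 = Module.finrank k L

lemma MetS.of_family {k L : Type} [Field k] [Field L] [Algebra k L] (s : L →ₗ[k] k) (c : L) (a : k)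
    (h : ℕ) (f : Fin h → L) (w : L) (hf : LinearIndependent k f)
    (h1 : ∀ i j, s (c * (f i * f j)) = 0) (h2 : ∀ i, s (c * (f i * w)) = 0)
    (h3 : s (c * (w * w)) = a) (h4 : 2 * h + 1 = Module.finrank k L) : MetS s c a := by
  have aux : ∀ y, (∀ i, s (c * (f i * y)) = 0) →
      ∀ x ∈ Submodule.span k (Set.range f), s (c * (x * y)) = 0 := by
    intro y hy x hx
    induction hx using Submodule.span_induction with
    | mem x hx => obtain ⟨i, rfl⟩ := hx; exact hy i
    | zero => simp
    | add x z _ _ hx hz => rw [add_mul, mul_add, map_add, hx, hz, add_zero]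
    | smul r x _ hx => rw [smul_mul_assoc, mul_smul_comm, map_smul, hx, smul_zero]
  refine ⟨Submodule.span k (Set.range f), w, ?_, aux w h2, h3, ?_⟩
  · intro x hx y hy
    apply aux y _ x hx
    intro i
    rw [mul_comm (f i)]
    exact aux (f i) (fun j => h1 j i) y hy
  · rw [finrank_span_eq_card hf, Fintype.card_fin, h4]

lemma MetS.tower {k E L : Type} [Field k] [Field E] [Field L] [Algebra k E] [Algebra E L]
    [Algebra k L] [IsScalarTower k E L] [FiniteDimensional k E] [FiniteDimensional E L]
    {s' : L →ₗ[E] E} {s : E →ₗ[k] k}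
    {c : E} {a : k} (h' : MetS s' 1 1) (h : MetS s c a) :
    MetS (s ∘ₗ s'.restrictScalars k) (algebraMap E L c) a := by
  obtain ⟨U', w', hU', hw', hww', hd'⟩ := h'
  obtain ⟨U, w, hU, hw, hww, hd⟩ := h
  simp only [one_mul] at hU' hw' hww'
  let f : (U' × U) →ₗ[k] L :=
    { toFun := fun p => p.1.1 + p.2.1 • w'
      map_add' := by intro p q; simp [add_smul]; ring
      map_smul' := by intro r p; simp }
  have hs' : ∀ (u : U') (x : E), s' (w' * (u.1 + x • w')) = x := by
    intro u x
    rw [mul_add, map_add, mul_comm w', hw' _ u.2, zero_add, mul_smul_comm, map_smul, hww']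
    simp
  have hmul : ∀ (u v : U') (x y : E), s' ((u.1 + x • w') * (v.1 + y • w')) = x * y := by
    intro u v x y
    rw [add_mul, mul_add, map_add, map_add, hU' _ u.2 _ v.2, mul_smul_comm, map_smul,
      hw' _ u.2, smul_mul_assoc, map_smul, hs']
    simp
  have hfi : Function.Injective f := by
    rw [injective_iff_map_eq_zero]
    rintro ⟨u, x⟩ h0
    have h0' : u.1 + x.1 • w' = 0 := h0
    have hx : x.1 = 0 := by
      have := hs' u x.1
      rw [h0', mul_zero, map_zero] at this
      exact this.symm
    have hu : u.1 = 0 := by rw [hx] at h0'; simpa using h0'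
    ext <;> simp [hx, hu]
  refine ⟨LinearMap.range f, w • w', ?_, ?_, ?_, ?_⟩
  · rintro _ ⟨p, rfl⟩ _ ⟨q, rfl⟩
    have : s' ((f p) * (f q)) = p.2.1 * q.2.1 := hmul _ _ _ _
    rw [← Algebra.smul_def]
    simp only [LinearMap.comp_apply, LinearMap.restrictScalars_apply, map_smul, this, smul_eq_mul]
    exact hU _ p.2.2 _ q.2.2
  · rintro _ ⟨p, rfl⟩
    have : s' ((f p) * (w • w')) = p.2.1 * w := by
      have := hmul p.1 0 p.2.1 w
      rw [ZeroMemClass.coe_zero, zero_add] at this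
      exact this
    rw [← Algebra.smul_def]
    simp only [LinearMap.comp_apply, LinearMap.restrictScalars_apply, map_smul, this, smul_eq_mul]
    exact hw _ p.2.2
  · have : s' ((w • w') * (w • w')) = w * w := by
      have := hmul 0 0 w w
      simpa using this
    rw [← Algebra.smul_def]
    simp only [LinearMap.comp_apply, LinearMap.restrictScalars_apply, map_smul, this, smul_eq_mul]
    exact hww
  · have : Module.Finite k U' := Module.Finite.trans E U'
    rw [LinearMap.finrank_range_of_inj hfi, Module.finrank_prod,
      ← Module.finrank_mul_finrank k E L, ← Module.finrank_mul_finrank k E U', ← hd', ← hd]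
    ring

lemma MetS.simple {k L : Type} [Field k] [Field L] [Algebra k L] [FiniteDimensional k L]
    (pb : PowerBasis k L) (hodd : Odd (Module.finrank k L)) :
    ∃ s : L →ₗ[k] k, MetS s 1 1 ∧ MetS s pb.gen (Algebra.norm k pb.gen) := by
  have hdim : pb.dim = Module.finrank k L := pb.finrank.symm
  obtain ⟨h, hh⟩ := hodd
  have hd : pb.dim = 2 * h + 1 := by rw [hdim, hh]
  let s : L →ₗ[k] k := pb.basis.coord ⟨0, by lia⟩
  have s1 : s 1 = 1 := by
    have := pb.basis.repr_self ⟨0, by lia⟩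
    have h0 : pb.basis ⟨0, by lia⟩ = 1 := by rw [pb.basis_eq_pow]; simp
    rw [h0] at this
    show pb.basis.repr 1 _ = 1
    rw [this]; simp
  have s0 : ∀ i, 0 < i → i < 2 * h + 1 → s (pb.gen ^ i) = 0 := by
    intro i hi hi'
    have h0 : pb.basis ⟨i, by lia⟩ = pb.gen ^ i := by rw [pb.basis_eq_pow]
    show pb.basis.repr (pb.gen ^ i) _ = 0
    rw [← h0, Module.Basis.repr_self, Finsupp.single_apply, if_neg]
    intro h; simp at h; lia
  have sN : s (pb.gen ^ (2 * h + 1)) = Algebra.norm k pb.gen := by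
    rw [Algebra.PowerBasis.norm_gen_eq_coeff_zero_minpoly, hd]
    have hm := minpoly.aeval k pb.gen
    have hnd : (minpoly k pb.gen).natDegree = 2 * h + 1 := by rw [pb.natDegree_minpoly, hd]
    rw [Polynomial.aeval_eq_sum_range, hnd, Finset.sum_range_succ, Finset.sum_range_succ'] at hm
    have hmon : (minpoly k pb.gen).coeff (2 * h + 1) = 1 := by
      rw [← hnd]; exact minpoly.monic (IsIntegral.of_finite k pb.gen)
    rw [hmon, one_smul, pow_zero] at hm
    have := congrArg s hm
    rw [map_add, map_add, map_sum, map_smul, s1, map_zero, Finset.sum_eq_zero, zero_add] at this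
    · rw [smul_eq_mul, mul_one] at this
      rw [Odd.neg_one_pow ⟨h, rfl⟩]
      linear_combination this
    · intro i hi
      rw [Finset.mem_range] at hi
      rw [map_smul, s0 _ (by lia) (by lia), smul_zero]
  have hli : ∀ (b : ℕ), b ≤ h + 1 → LinearIndependent k (fun i : Fin h => pb.gen ^ (i.1 + b)) := by
    intro b hb
    have := pb.basis.linearIndependent.comp
      (fun i : Fin h => (⟨i.1 + b, by have := i.2; lia⟩ : Fin pb.dim)) (by
        intro i j hij
        simp at hij
        exact Fin.ext hij)
    have e1 : (pb.basis ∘ fun i : Fin h => (⟨i.1 + b, by have := i.2; lia⟩ : Fin pb.dim))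
        = fun i : Fin h => pb.gen ^ (i.1 + b) := by
      funext i
      simp
    rw [e1] at this
    exact this
  refine ⟨s, ?_, ?_⟩
  · refine MetS.of_family s 1 1 h (fun i => pb.gen ^ (i.1 + 1)) 1 (hli 1 (by lia)) ?_ ?_ ?_ hh.symm
    · intro i j
      have := i.2; have := j.2
      rw [one_mul, ← pow_add]
      exact s0 _ (by lia) (by lia)
    · intro i
      have := i.2
      rw [one_mul, mul_one]
      exact s0 _ (by lia) (by lia)
    · rw [one_mul, one_mul, s1]
  · refine MetS.of_family s _ _ h (fun i => pb.gen ^ (i.1 + 0)) (pb.gen ^ h)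
      (hli 0 (by lia)) ?_ ?_ ?_ hh.symm
    · intro i j
      have := i.2; have := j.2
      rw [← pow_add, ← pow_succ']
      exact s0 _ (by lia) (by lia)
    · intro i
      have := i.2
      rw [← pow_add, ← pow_succ']
      exact s0 _ (by lia) (by lia)
    · rw [← pow_add, ← pow_succ', ← two_mul, sN]

lemma MetS.exists_one (n : ℕ) : ∀ (E L : Type) [Field E] [Field L] [Algebra E L]
    [FiniteDimensional E L], Module.finrank E L = n → Odd n → ∃ s : L →ₗ[E] E, MetS s 1 1 := by
  induction n using Nat.strong_induction_on with
  | _ n ih =>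
    intro E L _ _ _ _ hn hodd
    by_cases hall : ∀ α : L, Module.finrank E (IntermediateField.adjoin E {α}) = 1
    · have hbt := IntermediateField.bot_eq_top_of_finrank_adjoin_eq_one hall
      have h1 : Module.finrank E L = 1 := by
        rw [← IntermediateField.finrank_top' (F := E) (E := L), ← hbt, IntermediateField.finrank_bot]
      obtain ⟨g, hg⟩ := LinearMap.exists_leftInverse_of_injective (Algebra.linearMap E L)
        (LinearMap.ker_eq_bot.mpr (algebraMap E L).injective)
      have g1 : g 1 = 1 := by
        have := congrArg (fun f => f 1) hg
        simpa using this
      refine ⟨g, ⊥, 1, ?_, ?_, ?_, ?_⟩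
      · intro x hx y _; rw [Submodule.mem_bot] at hx; simp [hx]
      · intro x hx; rw [Submodule.mem_bot] at hx; simp [hx]
      · simpa using g1
      · simp [h1]
    · push Not at hall
      obtain ⟨α, hα⟩ := hall
      have hmul := Module.finrank_mul_finrank E (IntermediateField.adjoin E {α}) L
      rw [hn] at hmul
      have ho := hodd
      rw [← hmul, Nat.odd_mul] at ho
      have hpos : 0 < Module.finrank (IntermediateField.adjoin E {α}) L := Module.finrank_pos
      have hpos' : 0 < Module.finrank E (IntermediateField.adjoin E {α}) := Module.finrank_pos
      obtain ⟨s', hs'⟩ := ih (Module.finrank (IntermediateField.adjoin E {α}) L)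
        (by rw [← hmul]; nlinarith [show 2 ≤ Module.finrank E (IntermediateField.adjoin E {α}) by lia])
        (IntermediateField.adjoin E {α}) L rfl ho.2
      obtain ⟨s, hs, _⟩ := MetS.simple
        (IntermediateField.adjoin.powerBasis (IsIntegral.of_finite E α)) ho.1
      have := hs'.tower hs
      rw [map_one] at this
      exact ⟨_, this⟩

lemma MetS.exists_both {F K : Type} [Field F] [Field K] [Algebra F K] [FiniteDimensional F K]
    (hodd : Odd (Module.finrank F K)) (μ : K) :
    Odd (Module.finrank F (IntermediateField.adjoin F {μ})) ∧
    ∃ s : K →ₗ[F] F, MetS s 1 1 ∧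
      MetS s μ (Algebra.norm F (IntermediateField.AdjoinSimple.gen F μ)) := by
  have ho := hodd
  rw [← Module.finrank_mul_finrank F (IntermediateField.adjoin F {μ}) K, Nat.odd_mul] at ho
  refine ⟨ho.1, ?_⟩
  obtain ⟨s', hs'⟩ := MetS.exists_one _ (IntermediateField.adjoin F {μ}) K rfl ho.2
  obtain ⟨s, h1, h2⟩ := MetS.simple
        (IntermediateField.adjoin.powerBasis (IsIntegral.of_finite F μ)) ho.1
  have t1 := hs'.tower h1
  have t2 := hs'.tower h2
  rw [map_one] at t1
  rw [IntermediateField.adjoin.powerBasis_gen] at t2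
  exact ⟨_, t1, t2⟩


/-! ### The transfer argument -/

lemma abs_ker {k V W : Type} [Field k] [AddCommGroup V] [Module k V] [AddCommGroup W] [Module k W]
    [FiniteDimensional k V] (D : V →ₗ[k] W) :
    ∃ (G : Type) (_ : AddCommGroup G) (_ : Module k G) (_ : FiniteDimensional k G)
      (incl : G →ₗ[k] V), Function.Injective incl ∧ (∀ z, D (incl z) = 0) ∧
      Module.finrank k (LinearMap.range D) + Module.finrank k G = Module.finrank k V :=
  ⟨LinearMap.ker D, inferInstance, inferInstance, inferInstance, (LinearMap.ker D).subtype,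
    Subtype.val_injective, fun z => LinearMap.mem_ker.mp z.2,
    LinearMap.finrank_range_add_finrank_ker D⟩

lemma transfer {k L : Type} [Field k] [Field L] [Algebra k L] [FiniteDimensional k L]
    (h2 : (2 : L) ≠ 0) (s : L →ₗ[k] k) (μ : L) (a : k) (ha : a ≠ 0)
    (M1 : MetS s 1 1) (M2 : MetS s μ a) {ι : Type} [Fintype ι] (w : ι → k) (hw : ∀ i, w i ≠ 0)
    (han : AnisotropicQF w)
    (hiso : QFEquiv L (smulW μ (fun i => algebraMap k L (w i))) (fun i => algebraMap k L (w i))) :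
    ∃ E : (ι → k) →ₗ[k] (ι → k), ∀ x, diagQF w (E x) = a * diagQF w x := by
  classical
  obtain ⟨σ, hσ⟩ := hiso
  obtain ⟨U₁, w₁, hU₁, hw₁, hww₁, hd₁⟩ := M1
  obtain ⟨U₂, w₂, hU₂, hw₂, hww₂, hd₂⟩ := M2
  -- the bilinear form over `L`
  let P : (ι → L) → (ι → L) → L := fun x y => ∑ i, algebraMap k L (w i) * (x i * y i)
  have hPadd : ∀ x y, diagQF (fun i => algebraMap k L (w i)) (x + y)
      = diagQF (fun i => algebraMap k L (w i)) x + diagQF (fun i => algebraMap k L (w i)) y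
        + 2 * P x y := by
    intro x y
    simp only [diagQF, P, Finset.mul_sum, ← Finset.sum_add_distrib, Pi.add_apply]
    apply Finset.sum_congr rfl
    intro i _
    ring
  have hσ' : ∀ x, diagQF (fun i => algebraMap k L (w i)) (σ x)
      = μ * diagQF (fun i => algebraMap k L (w i)) x := by
    intro x
    rw [hσ]
    simp [diagQF, smulW, Finset.mul_sum, mul_assoc]
  have hPσ : ∀ x y, P (σ x) (σ y) = μ * P x y := by
    intro x y
    have e1 := hσ' (x + y)
    rw [map_add, hPadd, hPadd, hσ', hσ'] at e1
    apply mul_left_cancel₀ h2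
    linear_combination e1
  -- the transferred form
  let β : LinearMap.BilinForm k (ι → L) := LinearMap.mk₂ k (fun x y => s (P x y))
    (by intro x x' y; rw [← map_add]; congr 1
        simp only [P, ← Finset.sum_add_distrib, Pi.add_apply]
        exact Finset.sum_congr rfl fun i _ => by ring)
    (by intro c x y; rw [← map_smul]; congr 1
        simp only [P, Finset.smul_sum, Pi.smul_apply]
        exact Finset.sum_congr rfl fun i _ => by simp only [Algebra.smul_def]; ring)
    (by intro x y y'; rw [← map_add]; congr 1
        simp only [P, ← Finset.sum_add_distrib, Pi.add_apply]
        exact Finset.sum_congr rfl fun i _ => by ring)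
    (by intro c x y; rw [← map_smul]; congr 1
        simp only [P, Finset.smul_sum, Pi.smul_apply]
        exact Finset.sum_congr rfl fun i _ => by simp only [Algebra.smul_def]; ring)
  have hβ : ∀ x y, β x y = s (P x y) := fun x y => rfl
  have hker : LinearMap.ker β = ⊥ := by
    rw [LinearMap.ker_eq_bot']
    intro x hx
    funext i
    by_contra hxi
    have hxi' : x i ≠ 0 := hxi
    have hwi : algebraMap k L (w i) ≠ 0 := by
      rw [Ne, map_eq_zero]; exact hw i
    have := congrArg (fun f => f (Pi.single i ((algebraMap k L (w i) * x i)⁻¹ * (1 * (w₁ * w₁))))) hx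
    simp only [LinearMap.zero_apply] at this
    rw [hβ] at this
    have e1 : P x (Pi.single i ((algebraMap k L (w i) * x i)⁻¹ * (1 * (w₁ * w₁))))
        = 1 * (w₁ * w₁) := by
      simp only [P]
      rw [Finset.sum_eq_single i]
      · rw [Pi.single_eq_same]
        field_simp
      · intro j _ hj
        rw [Pi.single_eq_of_ne hj, mul_zero, mul_zero]
      · intro h; exact absurd (Finset.mem_univ i) h
    rw [e1, hww₁] at this
    exact one_ne_zero this
  -- evaluating transferred forms
  have hs : ∀ (c : L) (x y : ι → L), s (c * P x y) = ∑ i, w i * s (c * (x i * y i)) := by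
    intro c x y
    simp only [P, Finset.mul_sum, map_sum]
    apply Finset.sum_congr rfl
    intro i _
    rw [mul_left_comm, ← Algebra.smul_def, map_smul, smul_eq_mul]
  let J : (U : Submodule k L) → L → ((ι → U) × (ι → k)) →ₗ[k] (ι → L) := fun U w' =>
    { toFun := fun p i => (p.1 i : L) + p.2 i • w'
      map_add' := by intro p q; funext i; simp [add_smul]; ring
      map_smul' := by intro r p; funext i; simp [mul_smul] }
  have hJ : ∀ U w' p i, J U w' p i = (p.1 i : L) + p.2 i • w' := fun _ _ _ _ => rfl
  have hJ0 : ∀ (U : Submodule k L) (w' c : L), (∀ x ∈ U, ∀ y ∈ U, s (c * (x * y)) = 0) →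
      (∀ x ∈ U, s (c * (x * w')) = 0) → ∀ p q, p.2 = 0 → s (c * P (J U w' p) (J U w' q)) = 0 := by
    intro U w' c h1 h2 p q hp
    rw [hs]
    apply Finset.sum_eq_zero
    intro i _
    rw [hJ, hJ, hp]
    simp only [Pi.zero_apply, zero_smul, add_zero]
    rw [mul_add, mul_add, map_add, h1 _ (p.1 i).2 _ (q.1 i).2, mul_smul_comm, mul_smul_comm,
      map_smul, h2 _ (p.1 i).2, smul_zero, add_zero, mul_zero]
  have hJq : ∀ (U : Submodule k L) (w' c : L) (b : k), (∀ x ∈ U, ∀ y ∈ U, s (c * (x * y)) = 0) →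
      (∀ x ∈ U, s (c * (x * w')) = 0) → s (c * (w' * w')) = b →
      ∀ p, s (c * P (J U w' p) (J U w' p)) = b * diagQF w p.2 := by
    intro U w' c b h1 h2 h3 p
    rw [hs]
    simp only [diagQF, Finset.mul_sum]
    apply Finset.sum_congr rfl
    intro i _
    rw [hJ]
    have e1 : c * (((p.1 i : L) + p.2 i • w') * ((p.1 i : L) + p.2 i • w'))
        = c * ((p.1 i : L) * (p.1 i : L)) + (2 * p.2 i) • (c * ((p.1 i : L) * w'))
          + (p.2 i * p.2 i) • (c * (w' * w')) := by
      simp only [Algebra.smul_def, map_mul, map_ofNat]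
      ring
    rw [e1, map_add, map_add, map_smul, map_smul, h1 _ (p.1 i).2 _ (p.1 i).2, h2 _ (p.1 i).2, h3]
    simp only [smul_eq_mul]
    ring
  let σk : (ι → L) →ₗ[k] (ι → L) := σ.toLinearMap.restrictScalars k
  have hσk : ∀ x, σk x = σ x := fun _ => rfl
  let D : (((ι → U₁) × (ι → k)) × ((ι → U₂) × (ι → k))) →ₗ[k] (ι → L) :=
    (J U₁ w₁) ∘ₗ LinearMap.fst k _ _ - σk ∘ₗ (J U₂ w₂) ∘ₗ LinearMap.snd k _ _
  have hD : ∀ p, D p = J U₁ w₁ p.1 - σ (J U₂ w₂ p.2) := fun _ => rfl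
  obtain ⟨G, iG1, iG2, iG3, incl, hinj, hGD, r3⟩ := abs_ker D
  have hG : ∀ z : G, J U₁ w₁ (incl z).1 = σ (J U₂ w₂ (incl z).2) := by
    intro z
    have := hGD z
    rw [hD] at this
    exact sub_eq_zero.mp this
  have hGq : ∀ z : G, diagQF w (incl z).1.2 = a * diagQF w (incl z).2.2 := by
    intro z
    have e1 := hJq U₁ w₁ 1 1 hU₁ hw₁ hww₁ (incl z).1
    have e2 := hJq U₂ w₂ μ a hU₂ hw₂ hww₂ (incl z).2
    rw [hG z, hPσ, one_mul, e2, one_mul] at e1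
    exact e1.symm
  let p1 : G →ₗ[k] (ι → k) :=
    LinearMap.snd k _ _ ∘ₗ LinearMap.fst k _ _ ∘ₗ incl
  let p2 : G →ₗ[k] (ι → k) :=
    LinearMap.snd k _ _ ∘ₗ LinearMap.snd k _ _ ∘ₗ incl
  have hp1 : ∀ z, p1 z = (incl z).1.2 := fun _ => rfl
  have hp2 : ∀ z, p2 z = (incl z).2.2 := fun _ => rfl
  have hz0 : diagQF w (0 : ι → k) = 0 := by simp [diagQF]
  have hkp : ∀ z ∈ LinearMap.ker p2, (incl z).1.2 = 0 ∧ (incl z).2.2 = 0 := by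
    intro z hz
    have h0 : (incl z).2.2 = 0 := LinearMap.mem_ker.mp hz
    refine ⟨han _ ?_, h0⟩
    rw [hGq, h0, hz0, mul_zero]
  let θ : LinearMap.ker p2 →ₗ[k] (ι → L) :=
    J U₁ w₁ ∘ₗ LinearMap.fst k _ _ ∘ₗ incl ∘ₗ (LinearMap.ker p2).subtype
  have hθ : ∀ z, θ z = J U₁ w₁ (incl z.1).1 := fun _ => rfl
  have hθi : Function.Injective θ := by
    rw [injective_iff_map_eq_zero]
    intro z hz
    obtain ⟨a1, a2⟩ := hkp z.1 z.2
    rw [hθ] at hz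
    have b2 : J U₂ w₂ (incl z.1).2 = 0 := by
      have := hG z.1
      rw [hz] at this
      exact (map_eq_zero_iff σ σ.injective).mp this.symm
    have c1 : (incl z.1).1.1 = 0 := by
      funext i
      have := congrFun hz i
      rw [hJ, a1] at this
      apply Subtype.ext
      simpa using this
    have c2 : (incl z.1).2.1 = 0 := by
      funext i
      have := congrFun b2 i
      rw [hJ, a2] at this
      apply Subtype.ext
      simpa using this
    apply Subtype.ext
    apply hinj
    rw [show ((0 : LinearMap.ker p2) : G) = 0 from rfl, map_zero]
    exact Prod.ext (Prod.ext c1 a1) (Prod.ext c2 a2)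
  have hrange : LinearMap.range D ≤ β.orthogonal (LinearMap.range θ) := by
    rintro _ ⟨p, rfl⟩
    rw [LinearMap.BilinForm.mem_orthogonal_iff]
    rintro _ ⟨z, rfl⟩
    obtain ⟨a1, a2⟩ := hkp z.1 z.2
    show β (θ z) (D p) = 0
    rw [hD, map_sub]
    have e1 : β (θ z) (J U₁ w₁ p.1) = 0 := by
      rw [hβ, hθ, ← one_mul (P _ _)]
      exact hJ0 U₁ w₁ 1 hU₁ hw₁ _ _ a1
    have e2 : β (θ z) (σ (J U₂ w₂ p.2)) = 0 := by
      rw [hβ, hθ, hG z.1, hPσ]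
      exact hJ0 U₂ w₂ μ hU₂ hw₂ _ _ a2
    rw [e1, e2, sub_zero]
  -- dimension count
  have r1 := Submodule.finrank_mono hrange
  have r2 := LinearMap.BilinForm.finrank_add_finrank_orthogonal' (B := β) (LinearMap.range θ)
  have r2' : (LinearMap.range θ ⊓ β.ker : Submodule k (ι → L)) = ⊥ := by
    rw [show β.ker = ⊥ from hker, inf_bot_eq]
  rw [r2', finrank_bot, add_zero, LinearMap.finrank_range_of_inj hθi] at r2
  have r4 := LinearMap.finrank_range_add_finrank_ker p2
  have r5 : Module.finrank k (((ι → U₁) × (ι → k)) × ((ι → U₂) × (ι → k)))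
      = Fintype.card ι * Module.finrank k U₁ + Fintype.card ι
        + (Fintype.card ι * Module.finrank k U₂ + Fintype.card ι) := by
    simp [Module.finrank_prod, Module.finrank_pi_fintype]
  have r6 : Module.finrank k (ι → L) = Fintype.card ι * Module.finrank k L := by
    simp [Module.finrank_pi_fintype]
  have r7 : Fintype.card ι * Module.finrank k L
      = Fintype.card ι * Module.finrank k U₁ + Fintype.card ι * Module.finrank k U₂
        + Fintype.card ι := by
    have : Module.finrank k L = Module.finrank k U₁ + Module.finrank k U₂ + 1 := by lia
    rw [this]; ring
  have hsurj : Function.Surjective p2 := by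
    rw [← LinearMap.range_eq_top]
    apply Submodule.eq_top_of_finrank_eq
    apply le_antisymm (Submodule.finrank_le _)
    rw [Module.finrank_fintype_fun_eq_card]
    lia
  obtain ⟨g, hg⟩ := p2.exists_rightInverse_of_surjective (LinearMap.range_eq_top.mpr hsurj)
  refine ⟨p1 ∘ₗ g, ?_⟩
  intro x
  rw [LinearMap.comp_apply, hp1, hGq, ← hp2]
  have : p2 (g x) = x := congrArg (fun f => f x) hg
  rw [this]


/-- for anisotropic forms `q₁, q₂` over `k` that are not similar, and an
odd-degree extension `K` of `F = k((t))` with discrete valuation `v` extending the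
`t`-adic valuation (ramification index `e`), every similarity factor of
`(q₁ ⊥ ⟨t⟩q₂)_K` has even valuation: for `μ ∈ Kˣ` of odd valuation,
`⟨μ⟩·(q₁ ⊥ ⟨t⟩q₂)_K ≇ (q₁ ⊥ ⟨t⟩q₂)_K`. -/
theorem stmt_14 {k K : Type} [Field k] [Field K]
    [Algebra k K] [Algebra (LaurentSeries k) K] [IsScalarTower k (LaurentSeries k) K]
    [FiniteDimensional (LaurentSeries k) K]
    (hchar : (2 : k) ≠ 0)
    (hodd : Odd (Module.finrank (LaurentSeries k) K))
    {n₁ n₂ : ℕ} (d₁ : Fin n₁ → k) (d₂ : Fin n₂ → k)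
    (hd₁ : ∀ i, d₁ i ≠ 0) (hd₂ : ∀ j, d₂ j ≠ 0)
    (han₁ : AnisotropicQF d₁) (han₂ : AnisotropicQF d₂)
    (hnotsim : ¬∃ ν : k, ν ≠ 0 ∧ QFEquiv k (smulW ν d₁) d₂)
    (v : AddValuation K (WithTop ℤ)) (e : ℕ) (he : 0 < e)
    (hext : ∀ x : LaurentSeries k, x ≠ 0 →
      v (algebraMap (LaurentSeries k) K x) = ((e : ℤ) * x.order : ℤ)) :
    ∀ μ : K, μ ≠ 0 → ∀ m : ℤ, v μ = (m : ℤ) → Odd m →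
      ¬ QFEquiv K
        (smulW μ (orthW (fun i => algebraMap k K (d₁ i))
          (fun j => algebraMap (LaurentSeries k) K (HahnSeries.single (1 : ℤ) (1 : k)) *
            algebraMap k K (d₂ j))))
        (orthW (fun i => algebraMap k K (d₁ i))
          (fun j => algebraMap (LaurentSeries k) K (HahnSeries.single (1 : ℤ) (1 : k)) *
            algebraMap k K (d₂ j))) := by
  intro μ hμ m hm hmodd hiso
  have hC : ∀ c : k, algebraMap k K c = algebraMap (LaurentSeries k) K (laC k c) := by
    intro c
    have e1 : c • (1 : LaurentSeries k) = laC k c := by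
      rw [← mul_one (laC k c)]
      ext j
      rw [coeff_laC_mul]
      rfl
    rw [Algebra.algebraMap_eq_smul_one, ← e1, Algebra.algebraMap_eq_smul_one, smul_assoc, one_smul]
  have hW : (orthW (fun i => algebraMap k K (d₁ i))
          (fun j => algebraMap (LaurentSeries k) K (HahnSeries.single (1 : ℤ) (1 : k)) *
            algebraMap k K (d₂ j)))
      = fun i => algebraMap (LaurentSeries k) K (bigW d₁ d₂ i) := by
    funext i
    rcases i with i | j
    · exact hC _
    · simp only [bigW, orthW, Sum.elim_inr, map_mul, hC]
  rw [hW] at hiso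
  have hCinj : Function.Injective (laC k) := (laC k).injective
  have h2 : (2 : K) ≠ 0 := by
    have := (map_ne_zero (algebraMap k K)).mpr hchar
    rwa [map_ofNat] at this
  have hw : ∀ i, bigW d₁ d₂ i ≠ 0 := by
    intro i
    rcases i with i | j
    · exact (map_ne_zero (laC k)).mpr (hd₁ i)
    · refine mul_ne_zero ?_ ((map_ne_zero (laC k)).mpr (hd₂ j))
      exact HahnSeries.single_ne_zero one_ne_zero
  obtain ⟨ho, s, M1, M2⟩ := MetS.exists_both hodd μ
  have hg : IntermediateField.AdjoinSimple.gen (LaurentSeries k) μ ≠ 0 := by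
    intro h
    apply hμ
    have := congrArg Subtype.val h
    simpa using this
  have ha : Algebra.norm (LaurentSeries k)
      (IntermediateField.AdjoinSimple.gen (LaurentSeries k) μ) ≠ 0 :=
    Algebra.norm_ne_zero_iff.mpr hg
  obtain ⟨E, hE⟩ := transfer h2 s μ _ ha M1 M2 (bigW d₁ d₂) hw
    (big_aniso d₁ d₂ han₁ han₂) hiso
  let v' : AddValuation (IntermediateField.adjoin (LaurentSeries k) {μ}) (WithTop ℤ) :=
    v.comap (algebraMap (IntermediateField.adjoin (LaurentSeries k) {μ}) K)
  have hv' : ExtV (k := k) v' e := by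
    intro x hx
    exact hext x hx
  have hgm : v' (IntermediateField.AdjoinSimple.gen (LaurentSeries k) μ) = (m : ℤ) := hm
  have hn := norm_order he hv' _ hg m hgm
  have hao : Odd (Algebra.norm (LaurentSeries k)
      (IntermediateField.AdjoinSimple.gen (LaurentSeries k) μ)).order := by
    have : Odd (m * (Module.finrank (LaurentSeries k)
        (IntermediateField.adjoin (LaurentSeries k) {μ}) : ℤ)) :=
      hmodd.mul (by exact_mod_cast ho)
    rw [← hn] at this
    exact (Int.odd_mul.mp this).2
  exact hnotsim (final_step d₁ d₂ han₁ han₂ _ ha hao E hE)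
end
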